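/- Let (U, 𝔄_U) be the Borel measurable space of a separable metric space U, let α = U × U carry the product σ-algebra 𝔄_U ⊗ 𝔄_U, and let Δ = {(x, x) : x ∈ U} be the diagonal. Then the equality-selection query Q on finite multisets over α, which sends a multiset D of pairs to the sub-multiset of those pairs (x, y) ∈ D with x = y (retaining multiplicities), is measurable with respect to the counting σ-algebra 𝔠 on finite multisets over α, on both domain and codomain. -/

import Mathlib

open MeasureTheory

/- `bagCount F D` is `|D|_F`: the number of elements of the finite bag (multiset) `D`
that lie in the set `F`, counted with multiplicity. -/
open Classical in
noncomputable def bagCount {α : Type*} (F : Set α) (D : Multiset α) : ℕ :=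
  Multiset.countP (fun a => a ∈ F) D

/-- The counting event `#(F, n)`: all finite bags `D` with `|D|_F = n`. -/
def countingEvent {α : Type*} (F : Set α) (n : ℕ) : Set (Multiset α) :=
  {D : Multiset α | bagCount F D = n}

/-- The counting σ-algebra `𝔠` on finite bags (multisets) over a measurable space `α`:
the σ-algebra generated by the counting events `#(F, n)` for measurable `F ⊆ α` and `n ∈ ℕ`. -/
def countingSigmaAlgebra (α : Type*) [MeasurableSpace α] : MeasurableSpace (Multiset α) :=
  MeasurableSpace.generateFrom
    {A : Set (Multiset α) | ∃ (F : Set α) (n : ℕ), MeasurableSet F ∧ A = countingEvent F n}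

section CountingSigmaAlgebra

variable {α β : Type*}

theorem bagCount_filter (F : Set α) (p : α → Prop) [DecidablePred p] (D : Multiset α) :
    bagCount F (D.filter p) = bagCount (F ∩ {a | p a}) D := by
  rw [bagCount, bagCount, Multiset.countP_filter]
  congr!

variable [MeasurableSpace α]

theorem measurable_bagCount {F : Set α} (hF : MeasurableSet F) :
    Measurable[countingSigmaAlgebra α] (bagCount F) :=
  @measurable_to_countable' _ _ _ _ (countingSigmaAlgebra α) _ fun n =>
    MeasurableSpace.measurableSet_generateFrom ⟨F, n, hF, rfl⟩

theorem measurable_of_measurable_bagCount [MeasurableSpace β] {f : β → Multiset α}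
    (hf : ∀ F : Set α, MeasurableSet F → Measurable fun b => bagCount F (f b)) :
    Measurable[_, countingSigmaAlgebra α] f := by
  refine measurable_generateFrom ?_
  rintro _ ⟨F, n, hF, rfl⟩
  exact hf F hF (measurableSet_singleton n)

theorem measurable_multiset_filter {p : α → Prop} [DecidablePred p]
    (hp : MeasurableSet {a | p a}) :
    Measurable[countingSigmaAlgebra α, countingSigmaAlgebra α] (Multiset.filter p) := by
  let _ := countingSigmaAlgebra α
  refine measurable_of_measurable_bagCount fun F hF => ?_
  simp only [bagCount_filter]
  exact measurable_bagCount (hF.inter hp)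

theorem measurable_equality_selection_general {U : Type*} [MeasurableSpace U] [MeasurableEq U]
    [DecidablePred fun p : U × U => p.1 = p.2] :
    Measurable[countingSigmaAlgebra (U × U), countingSigmaAlgebra (U × U)]
      fun D : Multiset (U × U) => D.filter fun p => p.1 = p.2 :=
  measurable_multiset_filter measurableSet_diagonal

end CountingSigmaAlgebra

/- **Statement 7.** Let `U` be a separable metric space with its Borel σ-algebra, and
let `U × U` carry the product σ-algebra. The equality-selection query, sending a finite
bag of pairs `D` to the sub-bag of pairs `(x, y) ∈ D` with `x = y` (retaining
multiplicities), is measurable w.r.t. the counting σ-algebra on both sides. -/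
open Classical in
theorem measurable_equality_selection
    {U : Type*} [MetricSpace U] [TopologicalSpace.SeparableSpace U]
    [MeasurableSpace U] [BorelSpace U] :
    @Measurable (Multiset (U × U)) (Multiset (U × U))
      (countingSigmaAlgebra (U × U)) (countingSigmaAlgebra (U × U))
      (fun D : Multiset (U × U) => D.filter (fun p => p.1 = p.2)) := by
  have : SecondCountableTopology U := UniformSpace.secondCountable_of_separable U
  exact measurable_equality_selection_general
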